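/- Let f(t) = 1/√t on (0, 1/2), viewed as an element f ⊕ 0 of the space L¹ of the measure space X = (0,1/2) ⊔ {e} where {e} is an atom of measure 1/2 and (0,1/2) carries Lebesgue measure. Then for every a ∈ [0, 1/2), the function g = f·χ_{(0,a)} ⊕ (2∫_a^{1/2} f(t) dt)·χ_{{e}} is an extreme point of Ω(f ⊕ 0) = {h ∈ L¹(X) : h ≺ f ⊕ 0}. In particular, 0 ⊕ 2√2·χ_{{e}} is an extreme point of Ω(f ⊕ 0). -/

import Mathlib

open MeasureTheory Set

variable {X : Type*} [MeasurableSpace X]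

/-- The decreasing rearrangement (spectral scale) of `f` with respect to `μ`. -/
noncomputable def rr (μ : Measure X) (f : X → ℝ) (t : ℝ) : ℝ :=
  sInf {s : ℝ | μ {u | s < f u} ≤ ENNReal.ofReal t}

/-- Hardy–Littlewood–Pólya majorisation `g ≺ f` with respect to `μ`. -/
def Maj (μ : Measure X) (g f : X → ℝ) : Prop :=
  (∀ s ∈ Ico (0:ℝ) 1, (∫ t in Ioo (0:ℝ) s, rr μ g t) ≤ ∫ t in Ioo (0:ℝ) s, rr μ f t) ∧
    (∫ t in Ioo (0:ℝ) 1, rr μ g t) = ∫ t in Ioo (0:ℝ) 1, rr μ f t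

/-- The orbit `Ω(y)` of all integrable functions majorised by `y`. -/
def Omega (μ : Measure X) (y : X → ℝ) : Set (X → ℝ) :=
  {x | Integrable x μ ∧ Maj μ x y}

/-- `x` is an extreme point of the convex set `Ω` (functions identified `μ`-a.e.). -/
def ExtremePt (μ : Measure X) (Ω : Set (X → ℝ)) (x : X → ℝ) : Prop :=
  x ∈ Ω ∧ ∀ x₁ ∈ Ω, ∀ x₂ ∈ Ω,
    (∀ᵐ u ∂μ, x u = (x₁ u + x₂ u) / 2) → (∀ᵐ u ∂μ, x₁ u = x₂ u)

/-- The measure on `(0,1/2) ⊔ {e}`: Lebesgue measure on the interval plus an atom of mass `1/2`. -/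
noncomputable def muX : Measure (ℝ ⊕ Unit) :=
  Measure.map Sum.inl (volume.restrict (Ioo (0:ℝ) (1/2))) +
    (ENNReal.ofReal (1/2)) • Measure.dirac (Sum.inr ())

/-- The function `f ⊕ 0` with `f(t) = 1/√t` on `(0,1/2)`. -/
noncomputable def fX : ℝ ⊕ Unit → ℝ :=
  Sum.elim (fun t => if t ∈ Ioo (0:ℝ) (1/2) then 1 / Real.sqrt t else 0) (fun _ => 0)

/-- The function `f·χ_(0,a) ⊕ 2∫_a^{1/2} f`. -/
noncomputable def gX (a : ℝ) : ℝ ⊕ Unit → ℝ :=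
  Sum.elim (fun t => if t ∈ Ioo (0:ℝ) a then 1 / Real.sqrt t else 0)
    (fun _ => 2 * ∫ t in Ioo a (1/2 : ℝ), 1 / Real.sqrt t)

/-!
Write `x*` for the decreasing rearrangement of `x` and `F = f ⊕ 0`. If `x ≺ F`, the
Hardy–Littlewood inequality gives `∫_A x ≤ ∫_0^{μ A} x* ≤ ∫_0^{μ A} F*` for every measurable `A`.
For `A = (0, s)` with `s ≤ a` the truncation of `f` at `a` attains this bound, because `f` is
decreasing; hence so do both halves `x₁, x₂` of a midpoint decomposition of it, and differentiating
`∫_0^s x₁ = ∫_0^s f` in `s` gives `x₁ = f = x₂` a.e. on `(0, a)`. On the rest of the interval the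
truncation vanishes while `x₁, x₂ ≥ 0`, since functions majorised by a nonnegative one are
nonnegative; so both vanish there, and their values at the atom agree because their total integrals
do.

That the truncation is majorised by `F` is seen by comparing the hinge integrals `∫ (· - r)⁺`, which
control majorisation through `∫_0^s x* = inf_r (s r + ∫ (x - r)⁺)`.
-/

section Hinge

variable {μ : Measure X} [IsFiniteMeasure μ] {f : X → ℝ} {A : Set X}

lemma integrable_max_sub_zero (hf : Integrable f μ) (r : ℝ) :
    Integrable (fun u => max (f u - r) 0) μ :=
  (hf.sub (integrable_const r)).pos_part

lemma setIntegral_sub_const (hf : Integrable f μ) (A : Set X) (r : ℝ) :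
    ∫ u in A, (f u - r) ∂μ = ∫ u in A, f u ∂μ - μ.real A * r := by
  rw [integral_sub hf.integrableOn (integrable_const r), setIntegral_const, smul_eq_mul]

lemma setIntegral_le_mul_add_integral_max (hf : Integrable f μ) (A : Set X) (r : ℝ) :
    ∫ u in A, f u ∂μ ≤ μ.real A * r + ∫ u, max (f u - r) 0 ∂μ := by
  have hmax := integrable_max_sub_zero hf r
  rw [← sub_le_iff_le_add', ← setIntegral_sub_const hf]
  calc ∫ u in A, (f u - r) ∂μ ≤ ∫ u in A, max (f u - r) 0 ∂μ :=
        integral_mono (hf.sub (integrable_const r)).integrableOn hmax.integrableOn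
          fun _ => le_max_left _ _
    _ ≤ ∫ u, max (f u - r) 0 ∂μ :=
        setIntegral_le_integral hmax (.of_forall fun _ => le_max_right _ _)

lemma setIntegral_eq_mul_add_integral_max (hf : Integrable f μ) (hA : MeasurableSet A) {r : ℝ}
    (hle : ∀ᵐ u ∂μ, u ∈ A → r ≤ f u) (hge : ∀ᵐ u ∂μ, u ∉ A → f u ≤ r) :
    ∫ u in A, f u ∂μ = μ.real A * r + ∫ u, max (f u - r) 0 ∂μ := by
  rw [← sub_eq_iff_eq_add', ← setIntegral_sub_const hf, ← integral_indicator hA]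
  refine integral_congr_ae ?_
  filter_upwards [hle, hge] with u hle hge
  by_cases hu : u ∈ A
  · rw [indicator_of_mem hu, max_eq_left (sub_nonneg.2 (hle hu))]
  · rw [indicator_of_notMem hu, max_eq_right (sub_nonpos.2 (hge hu))]

end Hinge

section Rearrangement

open ProbabilityTheory

variable {μ : Measure X} [IsProbabilityMeasure μ] {f : X → ℝ}

lemma measure_lt_le_ofReal_iff_le_cdf (hf : AEMeasurable f μ) {t : ℝ} (ht : 0 ≤ t) (s : ℝ) :
    μ {u | s < f u} ≤ ENNReal.ofReal t ↔ 1 - t ≤ cdf (μ.map f) s := by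
  have := Measure.isProbabilityMeasure_map hf
  have hcompl : μ {u | s < f u} = ENNReal.ofReal (1 - cdf (μ.map f) s) := by
    rw [cdf_eq_real, ← probReal_compl_eq_one_sub measurableSet_Iic, compl_Iic, ofReal_measureReal,
      Measure.map_apply_of_aemeasurable hf measurableSet_Ioi]
    rfl
  rw [hcompl, ENNReal.ofReal_le_ofReal_iff ht, sub_le_comm]

/- The infimum defining `rr` is attained because the distribution function is right-continuous. -/
lemma rr_le_iff_le_cdf (hf : AEMeasurable f μ) {t : ℝ} (ht : t ∈ Ioo (0 : ℝ) 1) (s : ℝ) :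
    rr μ f t ≤ s ↔ 1 - t ≤ cdf (μ.map f) s := by
  simp only [rr, measure_lt_le_ofReal_iff_le_cdf hf ht.1.le]
  have hne : {s | 1 - t ≤ cdf (μ.map f) s}.Nonempty :=
    ((tendsto_cdf_atTop _).eventually_const_le (sub_lt_self 1 ht.1)).exists
  have hbdd : BddBelow {s | 1 - t ≤ cdf (μ.map f) s} := by
    obtain ⟨b, hb⟩ := ((tendsto_cdf_atBot (μ.map f)).eventually_lt_const (sub_pos.2 ht.2)).exists
    exact ⟨b, fun s hs => ((monotone_cdf _).reflect_lt (hb.trans_le hs)).le⟩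
  refine ⟨fun h => ?_, fun h => csInf_le hbdd h⟩
  rw [← (cdf (μ.map f)).iInf_Ioi_eq s]
  refine le_ciInf fun ⟨r, hr⟩ => ?_
  obtain ⟨q, hq, hqr⟩ := exists_lt_of_csInf_lt hne (h.trans_lt hr)
  exact hq.trans (monotone_cdf _ hqr.le)

lemma antitoneOn_rr (hf : AEMeasurable f μ) : AntitoneOn (rr μ f) (Ioo 0 1) := by
  intro s hs t ht hst
  rw [rr_le_iff_le_cdf hf ht]
  exact (sub_le_sub_left hst 1).trans ((rr_le_iff_le_cdf hf hs _).1 le_rfl)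

lemma aemeasurable_rr (hf : AEMeasurable f μ) :
    AEMeasurable (rr μ f) (volume.restrict (Ioo 0 1)) :=
  aemeasurable_restrict_of_antitoneOn measurableSet_Ioo (antitoneOn_rr hf)

instance isProbabilityMeasure_volume_restrict_Ioo_zero_one :
    IsProbabilityMeasure (volume.restrict (Ioo (0 : ℝ) 1)) := ⟨by simp⟩

lemma map_rr (hf : AEMeasurable f μ) :
    (volume.restrict (Ioo 0 1)).map (rr μ f) = μ.map f := by
  have := Measure.isProbabilityMeasure_map (aemeasurable_rr hf)
  have := Measure.isProbabilityMeasure_map hf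
  refine Measure.eq_of_cdf _ _ (StieltjesFunction.ext fun s => ?_)
  have hlt {t : ℝ} (ht : t ∈ Ioo (0 : ℝ) 1) : s < rr μ f t ↔ t < 1 - cdf (μ.map f) s := by
    rw [← not_le, rr_le_iff_le_cdf hf ht, not_le, lt_sub_comm]
  have hpre : rr μ f ⁻¹' Ioi s ∩ Ioo 0 1 = Ioo 0 (1 - cdf (μ.map f) s) := by
    ext t
    refine ⟨fun ⟨h, ht⟩ => ⟨ht.1, (hlt ht).1 h⟩, fun ht => ?_⟩
    have ht' : t ∈ Ioo (0 : ℝ) 1 := ⟨ht.1, ht.2.trans_le (sub_le_self 1 (cdf_nonneg _ s))⟩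
    exact ⟨(hlt ht').2 ht.2, ht'⟩
  rw [cdf_eq_real, ← compl_Ioi, probReal_compl_eq_one_sub measurableSet_Ioi, Measure.real,
    Measure.map_apply_of_aemeasurable (aemeasurable_rr hf) measurableSet_Ioi,
    Measure.restrict_apply₀' measurableSet_Ioo.nullMeasurableSet, hpre, ← Measure.real,
    Real.volume_real_Ioo_of_le (sub_nonneg.2 (cdf_le_one _ s)), sub_zero, sub_sub_cancel]

lemma integrableOn_rr (hf : Integrable f μ) : IntegrableOn (rr μ f) (Ioo 0 1) := by
  have hid : Integrable id (μ.map f) :=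
    (integrable_map_measure aestronglyMeasurable_id hf.aemeasurable).2 hf
  rw [← map_rr hf.aemeasurable] at hid
  exact (integrable_map_measure aestronglyMeasurable_id (aemeasurable_rr hf.aemeasurable)).1 hid

lemma integral_comp_rr (hf : AEMeasurable f μ) {φ : ℝ → ℝ} (hφ : Measurable φ) :
    ∫ t in Ioo (0 : ℝ) 1, φ (rr μ f t) = ∫ u, φ (f u) ∂μ := by
  rw [← integral_map hf hφ.aestronglyMeasurable, ← map_rr hf,
    integral_map (aemeasurable_rr hf) hφ.aestronglyMeasurable]

lemma integral_rr (hf : AEMeasurable f μ) : ∫ t in Ioo (0 : ℝ) 1, rr μ f t = ∫ u, f u ∂μ :=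
  integral_comp_rr hf measurable_id

lemma rr_nonneg (hf : 0 ≤ᵐ[μ] f) {t : ℝ} (ht : t < 1) : 0 ≤ rr μ f t := by
  refine Real.sInf_nonneg fun s hs => le_of_not_gt fun hneg => ?_
  have hfull : μ {u | s < f u} = 1 :=
    (measure_congr (Filter.eventuallyEq_univ.2 (hf.mono fun u hu => hneg.trans_le hu))).trans
      measure_univ
  rw [mem_ofPred_eq, hfull, ENNReal.one_le_ofReal] at hs
  exact not_lt.2 hs ht

lemma setIntegral_rr_le (hf : Integrable f μ) {s : ℝ} (hs : s ∈ Icc (0 : ℝ) 1) (r : ℝ) :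
    ∫ t in Ioo (0 : ℝ) s, rr μ f t ≤ s * r + ∫ u, max (f u - r) 0 ∂μ := by
  have hsub : Ioo 0 s ⊆ Ioo 0 1 := Ioo_subset_Ioo_right hs.2
  simpa [Measure.restrict_restrict_of_subset hsub, measureReal_restrict_apply,
    inter_eq_self_of_subset_left hsub, hs.1,
    integral_comp_rr hf.aemeasurable (φ := fun y => max (y - r) 0) (by fun_prop)]
    using setIntegral_le_mul_add_integral_max (integrableOn_rr hf) (Ioo 0 s) r

lemma setIntegral_rr_eq (hf : Integrable f μ) {s : ℝ} (hs : s ∈ Ioo (0 : ℝ) 1) :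
    ∫ t in Ioo (0 : ℝ) s, rr μ f t = s * rr μ f s + ∫ u, max (f u - rr μ f s) 0 ∂μ := by
  have hsub : Ioo 0 s ⊆ Ioo 0 1 := Ioo_subset_Ioo_right hs.2.le
  have hanti := antitoneOn_rr hf.aemeasurable
  have h := setIntegral_eq_mul_add_integral_max (integrableOn_rr hf) (A := Ioo 0 s)
    measurableSet_Ioo (r := rr μ f s)
    ((ae_restrict_mem measurableSet_Ioo).mono fun t ht hts => hanti ht hs hts.2.le)
    ((ae_restrict_mem measurableSet_Ioo).mono fun t ht hts =>
      hanti hs ht (not_lt.1 fun hlt => hts ⟨ht.1, hlt⟩))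
  simpa [Measure.restrict_restrict_of_subset hsub, measureReal_restrict_apply,
    inter_eq_self_of_subset_left hsub, hs.1.le,
    integral_comp_rr hf.aemeasurable (φ := fun y => max (y - rr μ f s) 0) (by fun_prop)] using h

lemma setIntegral_le_setIntegral_rr (hf : Integrable f μ) {A : Set X} (hA : MeasurableSet A) :
    ∫ u in A, f u ∂μ ≤ ∫ t in Ioo 0 (μ.real A), rr μ f t := by
  rcases (measureReal_nonneg (μ := μ) (s := A)).eq_or_lt with h0 | hpos
  · have : μ A = 0 := (measureReal_eq_zero_iff).1 h0.symm
    simp [← h0, Measure.restrict_eq_zero.2 this]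
  rcases (measureReal_le_one (μ := μ) (s := A)).eq_or_lt with h1 | hlt
  · have : ∀ᵐ u ∂μ, u ∈ A := (mem_ae_iff_prob_eq_one hA).2 ((ENNReal.toReal_eq_one_iff _).1 h1)
    rw [h1, integral_rr hf.aemeasurable, Measure.restrict_eq_self_of_ae_mem this]
  · rw [setIntegral_rr_eq hf ⟨hpos, hlt⟩]
    exact setIntegral_le_mul_add_integral_max hf A _

lemma setIntegral_rr_le_of_level (hf : Integrable f μ) {A : Set X} (hA : MeasurableSet A) {r : ℝ}
    (hle : ∀ᵐ u ∂μ, u ∈ A → r ≤ f u) (hge : ∀ᵐ u ∂μ, u ∉ A → f u ≤ r) :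
    ∫ t in Ioo 0 (μ.real A), rr μ f t ≤ ∫ u in A, f u ∂μ := by
  rw [setIntegral_eq_mul_add_integral_max hf hA hle hge]
  exact setIntegral_rr_le hf ⟨measureReal_nonneg, measureReal_le_one⟩ r

end Rearrangement

section Majorisation

variable {μ : Measure X} [IsProbabilityMeasure μ] {f g : X → ℝ}

lemma maj_of_integral_max_le (hf : Integrable f μ) (hg : Integrable g μ)
    (htotal : ∫ u, g u ∂μ = ∫ u, f u ∂μ)
    (hhinge : ∀ s ∈ Ioo (0 : ℝ) 1,
      ∫ u, max (g u - rr μ f s) 0 ∂μ ≤ ∫ u, max (f u - rr μ f s) 0 ∂μ) : Maj μ g f := by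
  refine ⟨fun s hs => ?_, by rwa [integral_rr hf.aemeasurable, integral_rr hg.aemeasurable]⟩
  rcases hs.1.eq_or_lt with rfl | hpos
  · simp
  calc ∫ t in Ioo 0 s, rr μ g t ≤ s * rr μ f s + ∫ u, max (g u - rr μ f s) 0 ∂μ :=
        setIntegral_rr_le hg (Ico_subset_Icc_self hs) _
    _ ≤ s * rr μ f s + ∫ u, max (f u - rr μ f s) 0 ∂μ :=
        add_le_add_right (hhinge s ⟨hpos, hs.2⟩) _
    _ = ∫ t in Ioo 0 s, rr μ f t := (setIntegral_rr_eq hf ⟨hpos, hs.2⟩).symm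

lemma Maj.integral_eq (h : Maj μ g f) (hf : AEMeasurable f μ) (hg : AEMeasurable g μ) :
    ∫ u, g u ∂μ = ∫ u, f u ∂μ := by
  rw [← integral_rr hf, ← integral_rr hg, h.2]

lemma Maj.setIntegral_le (h : Maj μ g f) (hg : Integrable g μ) {A : Set X}
    (hA : MeasurableSet A) : ∫ u in A, g u ∂μ ≤ ∫ t in Ioo 0 (μ.real A), rr μ f t := by
  refine (setIntegral_le_setIntegral_rr hg hA).trans ?_
  rcases (measureReal_le_one (μ := μ) (s := A)).eq_or_lt with h1 | hlt
  · rw [h1, h.2]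
  · exact h.1 _ ⟨measureReal_nonneg, hlt⟩

lemma Maj.ae_nonneg (h : Maj μ g f) (hf : Integrable f μ) (hg : Integrable g μ)
    (hf₀ : 0 ≤ᵐ[μ] f) : 0 ≤ᵐ[μ] g := by
  refine ae_nonneg_of_forall_setIntegral_nonneg hg fun A hA _ => ?_
  have hcompl : ∫ u in Aᶜ, g u ∂μ ≤ ∫ u, g u ∂μ :=
    calc ∫ u in Aᶜ, g u ∂μ ≤ ∫ t in Ioo 0 (μ.real Aᶜ), rr μ f t := h.setIntegral_le hg hA.compl
      _ ≤ μ.real Aᶜ * 0 + ∫ u, max (f u - 0) 0 ∂μ :=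
          setIntegral_rr_le hf ⟨measureReal_nonneg, measureReal_le_one⟩ 0
      _ = ∫ u, f u ∂μ := by
          rw [mul_zero, zero_add]
          exact integral_congr_ae (hf₀.mono fun u hu => by simpa using hu)
      _ = ∫ u, g u ∂μ := (h.integral_eq hf.aemeasurable hg.aemeasurable).symm
  linarith [integral_add_compl hA hg]

lemma setIntegral_eq_of_midpoint_mem_Omega {x₁ x₂ : X → ℝ} (h₁ : x₁ ∈ Omega μ f)
    (h₂ : x₂ ∈ Omega μ f) (hmid : ∀ᵐ u ∂μ, g u = (x₁ u + x₂ u) / 2) {A : Set X}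
    (hA : MeasurableSet A) (hattained : ∫ t in Ioo 0 (μ.real A), rr μ f t ≤ ∫ u in A, g u ∂μ) :
    ∫ u in A, x₁ u ∂μ = ∫ u in A, g u ∂μ := by
  have hsum : ∫ u in A, g u ∂μ = (∫ u in A, x₁ u ∂μ + ∫ u in A, x₂ u ∂μ) / 2 := by
    rw [← integral_add h₁.1.integrableOn h₂.1.integrableOn, ← integral_div]
    exact integral_congr_ae (ae_restrict_of_ae hmid)
  linarith [h₁.2.setIntegral_le h₁.1 hA, h₂.2.setIntegral_le h₂.1 hA]

end Majorisation

section IntervalIntegral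

lemma ae_eq_of_forall_integral_eq {E : Type*} [NormedAddCommGroup E] [NormedSpace ℝ E]
    [CompleteSpace E] {f g : ℝ → E} {a b : ℝ} (hf : IntervalIntegrable f volume a b)
    (hg : IntervalIntegrable g volume a b)
    (h : ∀ s ∈ Ioo a b, ∫ t in a..s, f t = ∫ t in a..s, g t) :
    ∀ᵐ t, t ∈ Ioo a b → f t = g t := by
  filter_upwards [hf.ae_hasDerivAt_integral, hg.ae_hasDerivAt_integral] with t hft hgt ht
  have hmem : t ∈ uIcc a b := Ioo_subset_Icc_self.trans Icc_subset_uIcc ht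
  refine (hft hmem a left_mem_uIcc).unique ((hgt hmem a left_mem_uIcc).congr_of_eventuallyEq ?_)
  filter_upwards [isOpen_Ioo.mem_nhds ht] with s hs using h s hs

variable {a b : ℝ} {f : ℝ → ℝ}

lemma intervalIntegral_indicator_Ioo {c : ℝ} (ha : a ∈ Icc 0 c) (f : ℝ → ℝ) :
    ∫ t in 0..c, (Ioo 0 a).indicator f t = ∫ t in 0..a, f t := by
  rw [intervalIntegral.integral_of_le (ha.1.trans ha.2), intervalIntegral.integral_of_le ha.1,
    setIntegral_indicator measurableSet_Ioo, integral_Ioc_eq_integral_Ioo,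
    inter_eq_self_of_subset_right (Ioo_subset_Ioc_self.trans (Ioc_subset_Ioc_right ha.2))]

lemma intervalIntegrable_max_sub_zero (hf : IntervalIntegrable f volume a b) (r : ℝ) :
    IntervalIntegrable (fun t => max (f t - r) 0) volume a b := by
  have hsub : IntervalIntegrable (fun t => f t - r) volume a b := hf.sub intervalIntegrable_const
  rw [intervalIntegrable_iff] at hsub ⊢
  exact hsub.pos_part

lemma mul_max_intervalIntegral_div_sub_le {m r : ℝ} (hab : a ≤ b) (hm : 0 < m)
    (hbm : b - a ≤ m) (hr : 0 ≤ r) (hf : IntervalIntegrable f volume a b) :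
    m * max ((∫ t in a..b, f t) / m - r) 0 ≤ ∫ t in a..b, max (f t - r) 0 := by
  rw [mul_max_of_nonneg _ _ hm.le, mul_sub, mul_div_cancel₀ _ hm.ne', mul_zero]
  refine max_le ?_ (intervalIntegral.integral_nonneg hab fun _ _ => le_max_right _ _)
  calc (∫ t in a..b, f t) - m * r ≤ (∫ t in a..b, f t) - (b - a) * r := by gcongr
    _ = ∫ t in a..b, (f t - r) := by
        rw [intervalIntegral.integral_sub hf intervalIntegrable_const,
          intervalIntegral.integral_const, smul_eq_mul]
    _ ≤ ∫ t in a..b, max (f t - r) 0 :=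
        intervalIntegral.integral_mono_on hab (hf.sub intervalIntegrable_const)
          (intervalIntegrable_max_sub_zero hf r) fun _ _ => le_max_left _ _

end IntervalIntegral

section Sum

variable {α β : Type*} [MeasurableSpace α] [MeasurableSpace β]

instance [MeasurableSingletonClass α] [MeasurableSingletonClass β] :
    MeasurableSingletonClass (α ⊕ β) where
  measurableSet_singleton
    | .inl a => by simpa using (measurableSet_singleton a).inl_image (β := β)
    | .inr b => by simpa using (measurableSet_singleton b).inr_image (α := α)

lemma measurableEmbedding_sumInl : MeasurableEmbedding (Sum.inl : α → α ⊕ β) :=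
  ⟨Sum.inl_injective, measurable_inl, fun _ hs => hs.inl_image⟩

end Sum

section IntervalWithAtom

/-- The probability space `(0, c) ⊔ {e}`: Lebesgue measure on the interval, realised inside `ℝ`,
plus an atom `e = Sum.inr ()` of mass `1 - c`. -/
noncomputable def intervalWithAtom (c : ℝ) : Measure (ℝ ⊕ Unit) :=
  (volume.restrict (Ioo 0 c)).map Sum.inl + ENNReal.ofReal (1 - c) • Measure.dirac (Sum.inr ())

/-- The function `f · χ_(0,a) ⊕ (1 - c)⁻¹ ∫_a^c f` on `(0, c) ⊔ {e}`, which concentrates the part of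
`f` on `(a, c)` at the atom. The choice `a = c` gives `f ⊕ 0`. -/
noncomputable def atomTruncation (c : ℝ) (f : ℝ → ℝ) (a : ℝ) : ℝ ⊕ Unit → ℝ :=
  Sum.elim ((Ioo 0 a).indicator f) fun _ => (∫ t in a..c, f t) / (1 - c)

variable {c : ℝ} {f : ℝ → ℝ} {a : ℝ} {h : ℝ ⊕ Unit → ℝ}

lemma isProbabilityMeasure_intervalWithAtom (hc : c ∈ Icc (0 : ℝ) 1) :
    IsProbabilityMeasure (intervalWithAtom c) := ⟨by
  simp [intervalWithAtom, measurableEmbedding_sumInl.map_apply, ← ENNReal.ofReal_add, hc.1, hc.2]⟩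

lemma ae_intervalWithAtom_iff (hc : c < 1) {p : ℝ ⊕ Unit → Prop} :
    (∀ᵐ u ∂intervalWithAtom c, p u) ↔ (∀ᵐ t, t ∈ Ioo 0 c → p (.inl t)) ∧ p (.inr ()) := by
  rw [intervalWithAtom, ae_add_measure_iff, measurableEmbedding_sumInl.ae_map_iff,
    ae_restrict_iff' measurableSet_Ioo, Measure.ae_ennreal_smul_measure_iff (by simpa),
    ae_dirac_eq, Filter.eventually_pure]

lemma integrable_intervalWithAtom_iff (hc : 0 ≤ c) :
    Integrable h (intervalWithAtom c) ↔ IntervalIntegrable (fun t => h (.inl t)) volume 0 c := by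
  have hdirac : Integrable h (ENNReal.ofReal (1 - c) • Measure.dirac (Sum.inr ())) :=
    (integrable_dirac (by simp)).smul_measure (by simp)
  rw [intervalWithAtom, integrable_add_measure, and_iff_left hdirac,
    measurableEmbedding_sumInl.integrable_map_iff,
    intervalIntegrable_iff_integrableOn_Ioo_of_le hc]
  rfl

lemma integral_intervalWithAtom (hc : c ∈ Icc (0 : ℝ) 1)
    (hh : IntervalIntegrable (fun t => h (.inl t)) volume 0 c) :
    ∫ u, h u ∂intervalWithAtom c = (∫ t in 0..c, h (.inl t)) + (1 - c) * h (.inr ()) := by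
  have hint := (integrable_intervalWithAtom_iff hc.1).2 hh
  rw [intervalWithAtom] at hint ⊢
  rw [integral_add_measure hint.left_of_add_measure hint.right_of_add_measure,
    measurableEmbedding_sumInl.integral_map, integral_smul_measure, integral_dirac,
    ENNReal.toReal_ofReal (sub_nonneg.2 hc.2), smul_eq_mul, intervalIntegral.integral_of_le hc.1,
    integral_Ioc_eq_integral_Ioo]

lemma intervalWithAtom_restrict_inl_image {s : ℝ} (hs : s ≤ c) :
    (intervalWithAtom c).restrict (Sum.inl '' Ioo 0 s) =
      (volume.restrict (Ioo 0 s)).map Sum.inl := by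
  classical
  rw [intervalWithAtom, Measure.restrict_add, Measure.restrict_smul,
    restrict_dirac, if_neg (by simp), smul_zero, add_zero,
    measurableEmbedding_sumInl.restrict_map, preimage_image_eq _ Sum.inl_injective,
    Measure.restrict_restrict_of_subset (Ioo_subset_Ioo_right hs)]

lemma measureReal_intervalWithAtom_inl_image {s : ℝ} (hs : s ∈ Icc 0 c) :
    (intervalWithAtom c).real (Sum.inl '' Ioo 0 s) = s := by
  rw [← measureReal_restrict_apply_self, intervalWithAtom_restrict_inl_image hs.2, Measure.real,
    measurableEmbedding_sumInl.map_apply, preimage_image_eq _ Sum.inl_injective,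
    Measure.restrict_apply_self, ← Measure.real, Real.volume_real_Ioo_of_le hs.1, sub_zero]

lemma setIntegral_intervalWithAtom_inl_image {s : ℝ} (hs : s ∈ Icc 0 c) :
    ∫ u in Sum.inl '' Ioo 0 s, h u ∂intervalWithAtom c = ∫ t in 0..s, h (.inl t) := by
  rw [intervalWithAtom_restrict_inl_image hs.2, measurableEmbedding_sumInl.integral_map,
    intervalIntegral.integral_of_le hs.1, integral_Ioc_eq_integral_Ioo]

lemma integral_comp_atomTruncation (hc : c ∈ Icc (0 : ℝ) 1) (ha : a ∈ Icc 0 c) {φ : ℝ → ℝ}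
    (hφ : φ 0 = 0) (hint : IntervalIntegrable (fun t => φ (f t)) volume 0 c) :
    ∫ u, φ (atomTruncation c f a u) ∂intervalWithAtom c =
      (∫ t in 0..a, φ (f t)) + (1 - c) * φ ((∫ t in a..c, f t) / (1 - c)) := by
  have hcomp : (fun t => φ (atomTruncation c f a (.inl t))) =
      (Ioo 0 a).indicator fun t => φ (f t) :=
    (indicator_comp_of_zero hφ).symm
  have hind : IntervalIntegrable ((Ioo 0 a).indicator fun t => φ (f t)) volume 0 c := by
    rw [intervalIntegrable_iff] at hint ⊢
    exact hint.indicator measurableSet_Ioo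
  rw [← intervalIntegral_indicator_Ioo ha, ← hcomp]
  rw [← hcomp] at hind
  exact integral_intervalWithAtom hc hind

lemma integrable_atomTruncation (hc : 0 ≤ c) (hf : IntervalIntegrable f volume 0 c) (a : ℝ) :
    Integrable (atomTruncation c f a) (intervalWithAtom c) := by
  rw [integrable_intervalWithAtom_iff hc, intervalIntegrable_iff]
  exact (intervalIntegrable_iff.1 hf).indicator measurableSet_Ioo

lemma integral_atomTruncation (hc : 0 ≤ c) (hc' : c < 1) (ha : a ∈ Icc 0 c)
    (hf : IntervalIntegrable f volume 0 c) :
    ∫ u, atomTruncation c f a u ∂intervalWithAtom c = ∫ t in 0..c, f t := by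
  have hmem : a ∈ uIcc 0 c := Icc_subset_uIcc ha
  rw [integral_comp_atomTruncation (φ := fun y => y) ⟨hc, hc'.le⟩ ha rfl hf,
    mul_div_cancel₀ _ (sub_pos.2 hc').ne']
  exact intervalIntegral.integral_add_adjacent_intervals
    (hf.mono_set (uIcc_subset_uIcc_left hmem)) (hf.mono_set (uIcc_subset_uIcc_right hmem))

lemma atomTruncation_nonneg (hc : c ≤ 1) (ha : a ∈ Icc 0 c) (hf : ∀ t ∈ Ioo 0 c, 0 ≤ f t)
    (u : ℝ ⊕ Unit) : 0 ≤ atomTruncation c f a u := by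
  rcases u with t | _
  · exact indicator_nonneg (fun t ht => hf t (Ioo_subset_Ioo_right ha.2 ht)) t
  · refine div_nonneg ?_ (sub_nonneg.2 hc)
    rw [intervalIntegral.integral_of_le ha.2, integral_Ioc_eq_integral_Ioo]
    exact setIntegral_nonneg measurableSet_Ioo fun t ht => hf t ⟨ha.1.trans_lt ht.1, ht.2⟩

/- The tail of `f` over `(a, c)` has its total preserved but is spread over the mass
`1 - c ≥ c - a`, which can only lower the hinge integral. -/
lemma integral_max_atomTruncation_sub_le (hc : c < 1) (hf : IntervalIntegrable f volume 0 c)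
    (ha : a ∈ Icc 0 c) (hac : c - a ≤ 1 - c) {r : ℝ} (hr : 0 ≤ r) :
    ∫ u, max (atomTruncation c f a u - r) 0 ∂intervalWithAtom c ≤
      ∫ u, max (atomTruncation c f c u - r) 0 ∂intervalWithAtom c := by
  have hc₀ : 0 ≤ c := ha.1.trans ha.2
  have hmax := intervalIntegrable_max_sub_zero hf r
  have hmem : a ∈ uIcc 0 c := Icc_subset_uIcc ha
  have hleft := uIcc_subset_uIcc_left hmem
  have hright := uIcc_subset_uIcc_right hmem
  have hφ : max (0 - r) 0 = 0 := by simpa using hr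
  rw [integral_comp_atomTruncation (φ := fun y => max (y - r) 0) ⟨hc₀, hc.le⟩ ha hφ hmax,
    integral_comp_atomTruncation (φ := fun y => max (y - r) 0) ⟨hc₀, hc.le⟩ (right_mem_Icc.2 hc₀) hφ
      hmax, ← intervalIntegral.integral_add_adjacent_intervals (hmax.mono_set hleft)
      (hmax.mono_set hright)]
  simpa [hr] using mul_max_intervalIntegral_div_sub_le ha.2 (sub_pos.2 hc) hac hr
    (hf.mono_set hright)

lemma atomTruncation_mem_Omega (hc : c < 1) (hf : IntervalIntegrable f volume 0 c)
    (hf₀ : ∀ t ∈ Ioo 0 c, 0 ≤ f t) (ha : a ∈ Icc 0 c) (hac : c - a ≤ 1 - c) :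
    atomTruncation c f a ∈ Omega (intervalWithAtom c) (atomTruncation c f c) := by
  have hc₀ : 0 ≤ c := ha.1.trans ha.2
  have hcc : c ∈ Icc 0 c := right_mem_Icc.2 hc₀
  have := isProbabilityMeasure_intervalWithAtom ⟨hc₀, hc.le⟩
  refine ⟨integrable_atomTruncation hc₀ hf a,
    maj_of_integral_max_le (integrable_atomTruncation hc₀ hf c)
      (integrable_atomTruncation hc₀ hf a) ?_ fun s hs => ?_⟩
  · rw [integral_atomTruncation hc₀ hc ha hf, integral_atomTruncation hc₀ hc hcc hf]
  · exact integral_max_atomTruncation_sub_le hc hf ha hac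
      (rr_nonneg (.of_forall (atomTruncation_nonneg hc.le hcc hf₀)) hs.2)

lemma setIntegral_atomTruncation {s : ℝ} (hs : s ∈ Icc 0 a) (hac : a ≤ c) (f : ℝ → ℝ) :
    ∫ u in Sum.inl '' Ioo 0 s, atomTruncation c f a u ∂intervalWithAtom c = ∫ t in 0..s, f t := by
  rw [setIntegral_intervalWithAtom_inl_image ⟨hs.1, hs.2.trans hac⟩]
  exact intervalIntegral.integral_congr_Ioo_of_le hs.1 fun t ht =>
    indicator_of_mem (Ioo_subset_Ioo_right hs.2 ht) f

lemma setIntegral_rr_atomTruncation_le (hc : c < 1) (hf : IntervalIntegrable f volume 0 c)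
    (hanti : AntitoneOn f (Ioo 0 c)) (hf₀ : ∀ t ∈ Ioo 0 c, 0 ≤ f t) {s : ℝ} (hs : s ∈ Ioo 0 c) :
    ∫ t in Ioo 0 s, rr (intervalWithAtom c) (atomTruncation c f c) t ≤ ∫ t in 0..s, f t := by
  have hc₀ : 0 ≤ c := hs.1.le.trans hs.2.le
  have hs' : s ∈ Icc 0 c := Ioo_subset_Icc_self hs
  have := isProbabilityMeasure_intervalWithAtom ⟨hc₀, hc.le⟩
  rw [← setIntegral_atomTruncation hs' le_rfl f]
  conv_lhs => rw [← measureReal_intervalWithAtom_inl_image hs']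
  refine setIntegral_rr_le_of_level (r := f s) (integrable_atomTruncation hc₀ hf c)
    (measurableEmbedding_sumInl.measurableSet_image.2 measurableSet_Ioo)
    ((ae_intervalWithAtom_iff hc).2 ⟨.of_forall fun t ht hts => ?_, by simp⟩)
    ((ae_intervalWithAtom_iff hc).2 ⟨.of_forall fun t ht hts => ?_, fun _ => ?_⟩)
  · rw [Sum.inl_injective.mem_set_image] at hts
    simpa [atomTruncation, ht] using hanti ht hs hts.2.le
  · rw [Sum.inl_injective.mem_set_image] at hts
    simpa [atomTruncation, ht] using hanti hs ht (not_lt.1 fun hlt => hts ⟨ht.1, hlt⟩)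
  · simpa [atomTruncation] using hf₀ s hs

lemma ae_eq_of_midpoint_atomTruncation (hc : c < 1) (hf : IntervalIntegrable f volume 0 c)
    (hanti : AntitoneOn f (Ioo 0 c)) (hf₀ : ∀ t ∈ Ioo 0 c, 0 ≤ f t) (ha : a ∈ Icc 0 c)
    {x₁ x₂ : ℝ ⊕ Unit → ℝ} (h₁ : x₁ ∈ Omega (intervalWithAtom c) (atomTruncation c f c))
    (h₂ : x₂ ∈ Omega (intervalWithAtom c) (atomTruncation c f c))
    (hmid : ∀ᵐ u ∂intervalWithAtom c, atomTruncation c f a u = (x₁ u + x₂ u) / 2) :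
    ∀ᵐ t, t ∈ Ioo 0 a → x₁ (.inl t) = f t := by
  have hc₀ : 0 ≤ c := ha.1.trans ha.2
  have := isProbabilityMeasure_intervalWithAtom ⟨hc₀, hc.le⟩
  have hsub : uIcc 0 a ⊆ uIcc 0 c := uIcc_subset_uIcc_left (Icc_subset_uIcc ha)
  refine ae_eq_of_forall_integral_eq
    (((integrable_intervalWithAtom_iff hc₀).1 h₁.1).mono_set hsub) (hf.mono_set hsub)
    fun s hs => ?_
  have hsc : s ∈ Ioo 0 c := Ioo_subset_Ioo_right ha.2 hs
  have htrunc := setIntegral_atomTruncation (Ioo_subset_Icc_self hs) ha.2 f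
  rw [← setIntegral_intervalWithAtom_inl_image (Ioo_subset_Icc_self hsc), ← htrunc]
  refine setIntegral_eq_of_midpoint_mem_Omega h₁ h₂ hmid
    (measurableEmbedding_sumInl.measurableSet_image.2 measurableSet_Ioo) ?_
  rw [htrunc, measureReal_intervalWithAtom_inl_image (Ioo_subset_Icc_self hsc)]
  exact setIntegral_rr_atomTruncation_le hc hf hanti hf₀ hsc

lemma ae_nonneg_of_mem_Omega_atomTruncation (hc : c ∈ Ico (0 : ℝ) 1)
    (hf : IntervalIntegrable f volume 0 c) (hf₀ : ∀ t ∈ Ioo 0 c, 0 ≤ f t)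
    (hh : h ∈ Omega (intervalWithAtom c) (atomTruncation c f c)) :
    ∀ᵐ t, t ∈ Ioo 0 c → 0 ≤ h (.inl t) := by
  have := isProbabilityMeasure_intervalWithAtom ⟨hc.1, hc.2.le⟩
  have hnonneg := hh.2.ae_nonneg (integrable_atomTruncation hc.1 hf c) hh.1
    (.of_forall (atomTruncation_nonneg hc.2.le (right_mem_Icc.2 hc.1) hf₀))
  exact ((ae_intervalWithAtom_iff hc.2).1 hnonneg).1

lemma ae_eq_of_ae_eq_inl (hc : c ∈ Ico (0 : ℝ) 1) {x₁ x₂ : ℝ ⊕ Unit → ℝ}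
    (h₁ : Integrable x₁ (intervalWithAtom c)) (h₂ : Integrable x₂ (intervalWithAtom c))
    (hinl : ∀ᵐ t, t ∈ Ioo 0 c → x₁ (.inl t) = x₂ (.inl t))
    (htotal : ∫ u, x₁ u ∂intervalWithAtom c = ∫ u, x₂ u ∂intervalWithAtom c) :
    ∀ᵐ u ∂intervalWithAtom c, x₁ u = x₂ u := by
  refine (ae_intervalWithAtom_iff hc.2).2 ⟨hinl, ?_⟩
  have hinterval : ∫ t in 0..c, x₁ (.inl t) = ∫ t in 0..c, x₂ (.inl t) := by
    rw [intervalIntegral.integral_of_le hc.1, intervalIntegral.integral_of_le hc.1,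
      integral_Ioc_eq_integral_Ioo, integral_Ioc_eq_integral_Ioo]
    exact setIntegral_congr_ae measurableSet_Ioo hinl
  rw [integral_intervalWithAtom ⟨hc.1, hc.2.le⟩ ((integrable_intervalWithAtom_iff hc.1).1 h₁),
    integral_intervalWithAtom ⟨hc.1, hc.2.le⟩ ((integrable_intervalWithAtom_iff hc.1).1 h₂),
    hinterval] at htotal
  exact mul_left_cancel₀ (sub_pos.2 hc.2).ne' (add_left_cancel htotal)

theorem truncations_are_extreme_points_general (hc : c < 1) (hf : IntervalIntegrable f volume 0 c)
    (hanti : AntitoneOn f (Ioo 0 c)) (hf₀ : ∀ t ∈ Ioo 0 c, 0 ≤ f t) (ha : a ∈ Icc 0 c)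
    (hac : c - a ≤ 1 - c) :
    ExtremePt (intervalWithAtom c) (Omega (intervalWithAtom c) (atomTruncation c f c))
      (atomTruncation c f a) := by
  refine ⟨atomTruncation_mem_Omega hc hf hf₀ ha hac, fun x₁ h₁ x₂ h₂ hmid => ?_⟩
  have hc' : c ∈ Ico 0 1 := ⟨ha.1.trans ha.2, hc⟩
  have := isProbabilityMeasure_intervalWithAtom ⟨hc'.1, hc.le⟩
  have hF := (integrable_atomTruncation hc'.1 hf c).aemeasurable
  refine ae_eq_of_ae_eq_inl hc' h₁.1 h₂.1 ?_ ((h₁.2.integral_eq hF h₁.1.aemeasurable).trans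
    (h₂.2.integral_eq hF h₂.1.aemeasurable).symm)
  filter_upwards [ae_eq_of_midpoint_atomTruncation hc hf hanti hf₀ ha h₁ h₂ hmid,
    ae_nonneg_of_mem_Omega_atomTruncation hc' hf hf₀ h₁,
    ae_nonneg_of_mem_Omega_atomTruncation hc' hf hf₀ h₂, ((ae_intervalWithAtom_iff hc).1 hmid).1]
    with t heq hnonneg₁ hnonneg₂ hmid ht
  have hmid := hmid ht
  by_cases hta : t ∈ Ioo 0 a
  · rw [atomTruncation, Sum.elim_inl, indicator_of_mem hta] at hmid
    linarith [heq hta]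
  · rw [atomTruncation, Sum.elim_inl, indicator_of_notMem hta] at hmid
    linarith [hnonneg₁ ht, hnonneg₂ ht]

end IntervalWithAtom

section InverseSquareRoot

lemma one_div_sqrt_eq_rpow {t : ℝ} (ht : 0 ≤ t) : 1 / √t = t ^ (-(1 / 2) : ℝ) := by
  rw [Real.sqrt_eq_rpow, Real.rpow_neg ht, one_div]

lemma intervalIntegrable_one_div_sqrt {c : ℝ} (hc : 0 ≤ c) :
    IntervalIntegrable (fun t => 1 / √t) volume 0 c := by
  refine (intervalIntegral.intervalIntegrable_rpow' (by norm_num)).congr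
    fun t ht => (one_div_sqrt_eq_rpow ?_).symm
  rw [uIoc_of_le hc] at ht
  exact ht.1.le

lemma integral_one_div_sqrt {c : ℝ} (hc : 0 ≤ c) : ∫ t in 0..c, 1 / √t = 2 * √c := by
  have hcongr : ∫ t in 0..c, 1 / √t = ∫ t in 0..c, t ^ (-(1 / 2) : ℝ) :=
    intervalIntegral.integral_congr_Ioo_of_le hc fun t ht => one_div_sqrt_eq_rpow ht.1.le
  rw [hcongr, integral_rpow (.inl (by norm_num)), Real.sqrt_eq_rpow]
  norm_num
  ring

lemma antitoneOn_one_div_sqrt : AntitoneOn (fun t => 1 / √t) (Ioi 0) := fun _ hs _ _ hst =>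
  one_div_le_one_div_of_le (Real.sqrt_pos.2 hs) (Real.sqrt_le_sqrt hst)

end InverseSquareRoot

lemma muX_eq_intervalWithAtom : muX = intervalWithAtom (1 / 2) := by
  rw [muX, intervalWithAtom, sub_half]

lemma gX_eq_atomTruncation {a : ℝ} (ha : a ≤ 1 / 2) :
    gX a = atomTruncation (1 / 2) (fun t => 1 / √t) a := by
  ext (t | _)
  · simp only [gX, atomTruncation, Sum.elim_inl, indicator]
  · simp only [gX, atomTruncation, Sum.elim_inr]
    rw [intervalIntegral.integral_of_le ha, integral_Ioc_eq_integral_Ioo, sub_half,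
      div_div_eq_mul_div, div_one, mul_comm]

lemma fX_eq_atomTruncation : fX = atomTruncation (1 / 2) (fun t => 1 / √t) (1 / 2) := by
  ext (t | _)
  · simp only [fX, atomTruncation, Sum.elim_inl, indicator]
  · simp [fX, atomTruncation]

lemma gX_zero : gX 0 = Sum.elim (fun _ => (0 : ℝ)) fun _ => 2 * √2 := by
  have hatom : 2 * √(1 / 2) / (1 - 1 / 2) = 2 * √2 := by
    rw [sub_half, Real.sqrt_div' _ zero_le_two, Real.sqrt_one]
    field_simp
    norm_num
  rw [gX_eq_atomTruncation (by norm_num), atomTruncation, Ioo_self, indicator_empty,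
    integral_one_div_sqrt (by norm_num), hatom]

lemma extremePt_gX {a : ℝ} (ha : a ∈ Icc (0 : ℝ) (1 / 2)) :
    ExtremePt muX (Omega muX fX) (gX a) := by
  rw [muX_eq_intervalWithAtom, fX_eq_atomTruncation, gX_eq_atomTruncation ha.2]
  exact truncations_are_extreme_points_general (by norm_num)
    (intervalIntegrable_one_div_sqrt (by norm_num))
    (antitoneOn_one_div_sqrt.mono Ioo_subset_Ioi_self) (fun _ _ => by positivity) ha
    (by linarith [ha.1])

theorem truncations_are_extreme_points :
    (∀ a ∈ Ico (0:ℝ) (1/2), ExtremePt muX (Omega muX fX) (gX a)) ∧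
      ExtremePt muX (Omega muX fX)
        (Sum.elim (fun _ => (0:ℝ)) (fun _ => 2 * Real.sqrt 2)) :=
  ⟨fun _ ha => extremePt_gX (Ico_subset_Icc_self ha), gX_zero ▸ extremePt_gX (by norm_num)⟩
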